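/- For every finite subset F of the 4-sphere S⁴, the complement S⁴ \ F (with the subspace topology) is simply connected. -/

import Mathlib

/-!
By general position, a closed set of codimension at least three in a real vector space has a simply
connected complement: a loop may be replaced by a nearby smooth one, and the points `c` from which
some point of that smooth loop is hidden behind the removed set fill up only countably many smooth
pieces of positive codimension. From any other point the whole loop is visible, so the cone over it
contracts it. A sphere minus `F` is a retract of its ambient space minus the closed cone over `F`,
and coning does not change the codimension.
-/

open Set Module Metric Topology
open scoped unitInterval Pointwise ContDiff

section ParamDim

variable {E G : Type*} [NormedAddCommGroup E] [NormedSpace ℝ E]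
  [NormedAddCommGroup G] [NormedSpace ℝ G] {k m : ℕ} {A : Set E} {B : Set G}

/-- `A` has parametric dimension at most `k`: it is covered by the images of countably many `C¹`
maps `ℝᵏ → E`. Unlike the Hausdorff dimension, this notion of smallness is additive under
products, which is what dimension counts in general position arguments need. -/
def ParamDimLE (k : ℕ) (A : Set E) : Prop :=
  ∃ S : Set ((Fin k → ℝ) → E), S.Countable ∧ (∀ f ∈ S, ContDiff ℝ 1 f) ∧ A ⊆ ⋃ f ∈ S, range f

namespace ParamDimLE

theorem of_countable (hA : A.Countable) : ParamDimLE k A := by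
  refine ⟨(fun a _ => a) '' A, hA.image _, ?_, fun a ha => ?_⟩
  · rintro _ ⟨a, -, rfl⟩
    exact contDiff_const
  · exact mem_biUnion (mem_image_of_mem _ ha) (mem_range_self 0)

theorem univ_real : ParamDimLE 1 (univ : Set ℝ) :=
  ⟨{fun y => y 0}, countable_singleton _, by rintro _ rfl; fun_prop,
    fun t _ => mem_biUnion rfl ⟨fun _ => t, rfl⟩⟩

theorem mono {A' : Set E} (hA : ParamDimLE k A) (h : A' ⊆ A) : ParamDimLE k A' :=
  let ⟨S, hS, hSd, hAS⟩ := hA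
  ⟨S, hS, hSd, h.trans hAS⟩

theorem insert (hA : ParamDimLE k A) (a : E) : ParamDimLE k (insert a A) := by
  obtain ⟨S, hS, hSd, hAS⟩ := hA
  refine ⟨Insert.insert (fun _ => a) S, hS.insert _, ?_, ?_⟩
  · rintro f (rfl | hf)
    exacts [contDiff_const, hSd f hf]
  · rw [biUnion_insert, range_const]
    exact insert_subset_insert hAS

theorem image (hA : ParamDimLE k A) {φ : E → G} (hφ : ContDiff ℝ 1 φ) :
    ParamDimLE k (φ '' A) := by
  obtain ⟨S, hS, hSd, hAS⟩ := hA
  refine ⟨(φ ∘ ·) '' S, hS.image _, ?_, ?_⟩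
  · rintro _ ⟨f, hf, rfl⟩
    exact hφ.comp (hSd f hf)
  · simpa only [biUnion_image, range_comp, image_iUnion] using image_mono (f := φ) hAS

theorem prod (hA : ParamDimLE k A) (hB : ParamDimLE m B) : ParamDimLE (k + m) (A ×ˢ B) := by
  obtain ⟨S, hS, hSd, hAS⟩ := hA
  obtain ⟨T, hT, hTd, hBT⟩ := hB
  refine ⟨image2 (fun f g y => (f fun i => y (Fin.castAdd m i), g fun j => y (Fin.natAdd k j))) S T,
    hS.image2 hT _, ?_, ?_⟩
  · rintro _ ⟨f, hf, g, hg, rfl⟩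
    have := hSd f hf
    have := hTd g hg
    fun_prop
  · rintro ⟨a, b⟩ ⟨ha, hb⟩
    obtain ⟨f, hf, u, rfl⟩ := mem_iUnion₂.1 (hAS ha)
    obtain ⟨g, hg, v, rfl⟩ := mem_iUnion₂.1 (hBT hb)
    exact mem_biUnion (mem_image2_of_mem hf hg) ⟨Fin.append u v, by simp⟩

theorem dimH_le (hA : ParamDimLE k A) : dimH A ≤ k := by
  obtain ⟨S, hS, hSd, hAS⟩ := hA
  calc dimH A ≤ ⨆ f ∈ S, dimH (range f) := (dimH_mono hAS).trans_eq (dimH_bUnion hS _)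
    _ ≤ k := iSup₂_le fun f hf => by simpa using (hSd f hf).dimH_range_le

theorem nonempty_compl (hA : ParamDimLE k A) (hk : k < Module.rank ℝ E) : Aᶜ.Nonempty := by
  -- Projecting to a subspace of dimension `k + 1` reduces to the case of finite dimension.
  obtain ⟨L, hL⟩ : ∃ L : (Fin (k + 1) → ℝ) →ₗ[ℝ] E, Function.Injective L :=
    Module.le_rank_iff_exists_linearMap.1 (by simpa using Cardinal.add_one_le_of_lt hk)
  obtain ⟨π, hπ⟩ := Submodule.ClosedComplemented.of_finiteDimensional L.range
  have hdim : dimH (π '' A) < finrank ℝ L.range := by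
    rw [LinearMap.finrank_range_of_inj hL, finrank_fin_fun]
    exact (hA.image π.contDiff).dimH_le.trans_lt (by exact_mod_cast k.lt_succ_self)
  obtain ⟨c, hc⟩ := (dense_compl_of_dimH_lt_finrank hdim).nonempty
  exact ⟨c, fun hcA => hc ⟨c, hcA, hπ c⟩⟩

/-- The excluded points lie on lines joining a point of `A` to a point of `B`. -/
theorem exists_forall_segment_subset_compl {A B : Set E} (hA : ParamDimLE k A)
    (hB : ParamDimLE m B) (h : k + m + 1 < Module.rank ℝ E) :
    ∃ c, ∀ b ∈ B \ A, segment ℝ b c ⊆ Aᶜ := by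
  obtain ⟨c, hc⟩ := (((hA.prod hB).prod univ_real).image
    (φ := fun z => AffineMap.lineMap z.1.2 z.1.1 z.2)
    (by simp only [AffineMap.lineMap_apply_module]; fun_prop)).nonempty_compl (mod_cast h)
  refine ⟨c, fun b hb => ?_⟩
  rw [segment_eq_image_lineMap]
  rintro _ ⟨t, -, rfl⟩ ha
  have ht : t ≠ 0 := fun ht => hb.2 (by simpa [ht] using ha)
  refine hc ⟨((AffineMap.lineMap b c t, b), t⁻¹), ⟨⟨ha, hb.1⟩, mem_univ _⟩, ?_⟩
  simp [AffineMap.lineMap_lineMap_right, ht]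

end ParamDimLE

end ParamDim

section SegmentHomotopy

variable {E : Type*} [AddCommGroup E] [TopologicalSpace E] [IsTopologicalAddGroup E] [Module ℝ E]
  [ContinuousSMul ℝ E] {W : Set E}

theorem exists_homotopy_forall_mem_of_segment_subset {x y : E} {p q : Path x y}
    (h : ∀ t, segment ℝ (p t) (q t) ⊆ W) :
    ∃ H : p.Homotopy q, ∀ z, H z ∈ W := by
  refine ⟨{ ContinuousMap.Homotopy.affine p.toContinuousMap q.toContinuousMap with
    prop' := ?_ }, fun z => h z.2 ?_⟩
  · rintro s t (rfl | rfl) <;> simp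
  · rw [segment_eq_image_lineMap]
    exact mem_image_of_mem _ z.1.2

theorem exists_homotopy_refl_of_segment_subset {x c : E} {p : Path x x}
    (h : ∀ t, segment ℝ (p t) c ⊆ W) :
    ∃ H : p.Homotopy (.refl x), ∀ z, H z ∈ W := by
  let D : Set E := ⋃ t, segment ℝ (p t) c
  have hpD : ∀ t, p t ∈ D := fun t => mem_iUnion.2 ⟨t, left_mem_segment ℝ _ _⟩
  have hD : StarConvex ℝ c D := starConvex_iUnion fun t =>
    (convex_segment (p t) c).starConvex (right_mem_segment ℝ _ _)
  have : ContractibleSpace D := hD.contractibleSpace ⟨_, hpD 0⟩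
  have hDsc : IsSimplyConnected D := SimplyConnectedSpace.ofContractible D
  obtain ⟨H, hH⟩ := (isSimplyConnected_iff_exists_homotopy_refl_forall_mem.1 hDsc).2 x p hpD
  exact ⟨H, fun z => iUnion_subset h (hH z)⟩

end SegmentHomotopy

section SmoothApproximation

variable {E : Type*} [NormedAddCommGroup E] [NormedSpace ℝ E] {x y : E}

theorem exists_contDiff_path_dist_lt (p : Path x y) {ε : ℝ} (hε : 0 < ε) :
    ∃ (q : Path x y) (g : ℝ → E), ContDiff ℝ ω g ∧ (∀ t : I, q t = g t) ∧
      ∀ t, dist (q t) (p t) < ε := by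
  obtain ⟨n, hn, hn0⟩ := ((tendsto_nhds.1 (bernsteinApproximation_uniform p.toContinuousMap) ε
    hε).and (Filter.eventually_ne_atTop 0)).exists
  refine ⟨⟨bernsteinApproximation n p.toContinuousMap, by simp, by simp [hn0]⟩,
    fun s => ∑ k : Fin (n + 1),
      ((n.choose k : ℝ) * s ^ (k : ℕ) * (1 - s) ^ (n - (k : ℕ))) • p (bernstein.z k),
    by fun_prop, fun t => ?_, fun t => (ContinuousMap.dist_apply_le_dist t).trans_lt hn⟩
  simp [bernsteinApproximation.apply, bernstein_apply]

theorem exists_contDiff_path_homotopy_forall_mem {W : Set E} (hW : IsOpen W)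
    {p : Path x y} (hp : ∀ t, p t ∈ W) :
    ∃ (q : Path x y) (g : ℝ → E), ContDiff ℝ ω g ∧ (∀ t : I, q t = g t) ∧
      ∃ H : p.Homotopy q, ∀ z, H z ∈ W := by
  obtain ⟨δ, hδ, hδW⟩ := (isCompact_range p.continuous).exists_thickening_subset_open hW
    (range_subset_iff.2 hp)
  obtain ⟨q, g, hg, hqg, hpq⟩ := exists_contDiff_path_dist_lt p hδ
  refine ⟨q, g, hg, hqg, exists_homotopy_forall_mem_of_segment_subset fun t => ?_⟩
  calc segment ℝ (p t) (q t) ⊆ ball (p t) δ :=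
        (convex_ball _ _).segment_subset (mem_ball_self hδ) (hpq t)
    _ ⊆ W := (ball_subset_thickening (mem_range_self t) δ).trans hδW

end SmoothApproximation

section Retract

variable {X Y : Type*} [TopologicalSpace X] [TopologicalSpace Y]

theorem simplyConnectedSpace_of_leftInverse [SimplyConnectedSpace Y]
    (i : C(X, Y)) (r : C(Y, X)) (h : Function.LeftInverse r i) :
    SimplyConnectedSpace X := by
  refine simply_connected_iff_loops_nullhomotopic.2
    ⟨h.surjective.pathConnectedSpace r.continuous, fun x p => ?_⟩
  have := ((SimplyConnectedSpace.paths_homotopic (p.map i.continuous) (.refl _)).map r).pathCast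
    (h x).symm (h x).symm
  convert this using 1 <;> ext t <;> simp [h _]

theorem isSimplyConnected_of_prod {A : Set X} {B : Set Y}
    (h : IsSimplyConnected (A ×ˢ B)) : IsSimplyConnected A := by
  obtain ⟨⟨_, b⟩, _, hb⟩ := h.nonempty
  have := h.simplyConnectedSpace
  exact simplyConnectedSpace_of_leftInverse (Y := (A ×ˢ B : Set (X × Y)))
    ⟨fun a => ⟨(a, b), a.2, hb⟩, by fun_prop⟩ ⟨fun z => ⟨z.1.1, z.2.1⟩, by fun_prop⟩ fun _ => rfl

end Retract

section Complement

variable {E : Type*} [NormedAddCommGroup E] [NormedSpace ℝ E] {k : ℕ} {A : Set E}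

theorem ParamDimLE.isPathConnected_compl (hA : ParamDimLE k A)
    (hk : k + 1 < Module.rank ℝ E) : IsPathConnected Aᶜ := by
  have hne : Aᶜ.Nonempty := hA.nonempty_compl (le_self_add.trans_lt hk)
  refine isPathConnected_iff.2 ⟨hne, fun x hx y hy => ?_⟩
  obtain ⟨c, hc⟩ := hA.exists_forall_segment_subset_compl (m := 0)
    (ParamDimLE.of_countable (toFinite {x, y}).countable) (by simpa using hk)
  exact (JoinedIn.of_segment_subset (hc x ⟨by simp, hx⟩)).trans
    (JoinedIn.of_segment_subset (hc y ⟨by simp, hy⟩)).symm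

theorem ParamDimLE.isSimplyConnected_compl (hA : ParamDimLE k A) (hAc : IsClosed A)
    (hk : k + 2 < Module.rank ℝ E) : IsSimplyConnected Aᶜ := by
  refine isSimplyConnected_iff_exists_homotopy_refl_forall_mem.2
    ⟨hA.isPathConnected_compl
      (lt_of_le_of_lt (by gcongr; exact one_le_two) hk), fun x p hp => ?_⟩
  obtain ⟨q, g, hg, hqg, H, hH⟩ := exists_contDiff_path_homotopy_forall_mem hAc.isOpen_compl hp
  have hq : ∀ t, q t ∈ Aᶜ := fun t => by simpa using hH (1, t)
  have hg1 : ParamDimLE 1 (range g) := by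
    simpa using ParamDimLE.univ_real.image (hg.of_le le_top)
  obtain ⟨c, hc⟩ := hA.exists_forall_segment_subset_compl hg1
    (by rwa [Nat.cast_one, add_assoc, one_add_one_eq_two])
  obtain ⟨K, hK⟩ := exists_homotopy_refl_of_segment_subset fun t =>
    hc (q t) ⟨hqg t ▸ mem_range_self _, hq t⟩
  refine ⟨H.trans K, fun z => ?_⟩
  rw [Path.Homotopy.trans_apply]
  split_ifs
  exacts [hH _, hK _]

end Complement

section Sphere

variable {E : Type*} [NormedAddCommGroup E] [NormedSpace ℝ E] {r : ℝ}

theorem Ioi_smul_sphere_eq_image_preimage (hr : 0 < r) (U : Set (sphere (0 : E) r)) :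
    Ioi (0 : ℝ) • (Subtype.val '' U : Set E) =
      Subtype.val '' (homeomorphSphereProd E r hr ⁻¹' (U ×ˢ univ)) := by
  rw [← Homeomorph.image_symm, image_image]
  ext x
  constructor
  · rintro ⟨s, hs, _, ⟨u, hu, rfl⟩, rfl⟩
    exact ⟨(u, ⟨s, hs⟩), ⟨hu, mem_univ _⟩, rfl⟩
  · rintro ⟨⟨u, s⟩, ⟨hu, -⟩, rfl⟩
    exact smul_mem_smul s.2 (mem_image_of_mem _ hu)

theorem isSimplyConnected_Ioi_smul_sphere_iff (hr : 0 < r) {U : Set (sphere (0 : E) r)} :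
    IsSimplyConnected (Ioi (0 : ℝ) • (Subtype.val '' U : Set E)) ↔
      IsSimplyConnected (U ×ˢ (univ : Set (Ioi (0 : ℝ)))) := by
  rw [Ioi_smul_sphere_eq_image_preimage hr, IsEmbedding.subtypeVal.isSimplyConnected_image,
    Homeomorph.isSimplyConnected_preimage]

theorem compl_Ioi_smul_compl_subset (hr : 0 < r) (F : Set (sphere (0 : E) r)) :
    (Ioi (0 : ℝ) • (Subtype.val '' Fᶜ : Set E))ᶜ ⊆
      (fun z : E × ℝ => z.2 • z.1) '' (insert 0 (Subtype.val '' F) ×ˢ univ) := by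
  intro x hx
  by_cases hx0 : x = 0
  · exact ⟨(0, 0), by simp [hx0]⟩
  obtain ⟨⟨p, s⟩, hps⟩ := (homeomorphSphereProd E r hr).symm.surjective ⟨x, hx0⟩
  have hsp : (s : ℝ) • (p : E) = x := congrArg Subtype.val hps
  have hpF : p ∈ F := by
    by_contra hpF
    exact hx (hsp ▸ smul_mem_smul s.2 (mem_image_of_mem _ hpF))
  exact ⟨(p, s), ⟨mem_insert_of_mem _ (mem_image_of_mem _ hpF), mem_univ _⟩, hsp⟩

theorem compl_finite_subset_sphere_simply_connected_general {k : ℕ} (hr : 0 < r)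
    {F : Set (sphere (0 : E) r)} (hF : IsClosed F) (hdim : ParamDimLE k (Subtype.val '' F))
    (hk : k + 3 < Module.rank ℝ E) : SimplyConnectedSpace ↥Fᶜ := by
  have hopen : IsOpen (Ioi (0 : ℝ) • (Subtype.val '' Fᶜ : Set E)) :=
    isOpen_Ioi.smul_sphere hr.ne' self_notMem_Ioi hF.isOpen_compl
  have hcone : ParamDimLE (k + 1) (Ioi (0 : ℝ) • (Subtype.val '' Fᶜ : Set E))ᶜ :=
    (((hdim.insert 0).prod ParamDimLE.univ_real).image (by fun_prop)).mono
      (compl_Ioi_smul_compl_subset hr F)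
  have hsc := hcone.isSimplyConnected_compl hopen.isClosed_compl
    (by convert hk using 1; push_cast; ring)
  rw [compl_compl, isSimplyConnected_Ioi_smul_sphere_iff hr] at hsc
  exact isSimplyConnected_of_prod hsc

end Sphere

/-- The complement of a finite set of points in the 4-sphere is simply connected. -/
theorem compl_finite_subset_sphere_simply_connected
    (F : Set (Metric.sphere (0 : EuclideanSpace ℝ (Fin 5)) 1)) (hF : F.Finite) :
    SimplyConnectedSpace ↥Fᶜ := by
  refine compl_finite_subset_sphere_simply_connected_general (k := 0) one_pos hF.isClosed
    (ParamDimLE.of_countable (hF.image _).countable) ?_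
  rw [← finrank_eq_rank, finrank_euclideanSpace_fin]
  norm_num
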